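/- arXiv:1402.0299 — 7 statements merged into one kernel-verified Lean document; each statement's English description precedes it below -/
import Mathlib

section
/- The relation ⊑ is a partial order on L: it is reflexive, transitive, and antisymmetric. -/
/-- `x =_α y` : the equivalence determined by the preorder `⊑_α`. -/
def eqa {L : Type*} (sq : Ordinal → L → L → Prop) (α : Ordinal) (x y : L) : Prop :=
  sq α x y ∧ sq α y x

/-- `x ⊏_α y` : `x ⊑_α y` but not `x =_α y`. -/
def sqlt {L : Type*} (sq : Ordinal → L → L → Prop) (α : Ordinal) (x y : L) : Prop :=
  sq α x y ∧ ¬ eqa sq α x y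

/-- `x ⊑ y` : `x ⊏_α y` for some `α < κ`, or `x = y`. -/
def sqle {L : Type*} (sq : Ordinal → L → L → Prop) (κ : Ordinal) (x y : L) : Prop :=
  (∃ α < κ, sqlt sq α x y) ∨ x = y

/-- `(x]_α = {y | ∀ β < α, x =_β y}`. -/
def seg {L : Type*} (sq : Ordinal → L → L → Prop) (α : Ordinal) (x : L) : Set L :=
  {y | ∀ β < α, eqa sq β x y}

/-- `[x]_α = {y | x =_α y ∧ ∀ β < α, x =_β y}`. -/
def segcl {L : Type*} (sq : Ordinal → L → L → Prop) (α : Ordinal) (x : L) : Set L :=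
  {y | eqa sq α x y ∧ ∀ β < α, eqa sq β x y}

/-- `y = ⨆_α X` (for `X ⊆ (x]_α`): the element specified by Axiom 3. -/
def IsLubA {L : Type*} [LE L] (sq : Ordinal → L → L → Prop) (α : Ordinal) (x : L)
    (X : Set L) (y : L) : Prop :=
  y ∈ seg sq α x ∧ (∀ z ∈ X, sq α z y) ∧
    ∀ w ∈ seg sq α x, (∀ z ∈ X, sq α z w) → sq α y w ∧ y ≤ w

/-!
Axiom 1 makes `⊑_α` decrease as `α` grows. Hence if `x ⊏_α y ⊏_β z`, then both inequalities hold
weakly at level `min α β` and at least one of them is strict there, so `x ⊏ z`. Thus `⊏` is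
transitive; being irreflexive, it is a strict order, and its reflexive closure `⊑` is a partial
order.
-/

open Relation

section StrictOrder

variable {L : Type*} {r : L → L → Prop}

theorem isPartialOrder_reflGen [IsStrictOrder L r] : IsPartialOrder L (ReflGen r) where
  antisymm
    | _, _, .refl, _ => rfl
    | _, _, _, .refl => rfl
    | _, _, .single hxy, .single hyx => (asymm_of r hxy hyx).elim

end StrictOrder

section StrictUnion

variable {L ι : Type*}

/-- The union over `i` of the strict parts of the relations `r i`. For `r i = ⊑_i`, with `i`
ranging over the ordinals below `κ`, this is the relation `⊏`. -/
def StrictUnion (r : ι → L → L → Prop) (x y : L) : Prop :=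
  ∃ i, r i x y ∧ ¬ r i y x

variable {r : ι → L → L → Prop}

theorem StrictUnion.irrefl (x : L) : ¬ StrictUnion r x x :=
  fun ⟨_, hxx, hnxx⟩ => hnxx hxx

variable [LinearOrder ι] [∀ i, IsTrans L (r i)]

theorem StrictUnion.trans (hr : Antitone r) {x y z : L} :
    StrictUnion r x y → StrictUnion r y z → StrictUnion r x z := by
  rintro ⟨i, hxy, hnyx⟩ ⟨j, hyz, hnzy⟩
  rcases le_total i j with hij | hji
  · have hyz_i : r i y z := hr hij y z hyz
    exact ⟨i, trans_of (r i) hxy hyz_i, fun hzx => hnyx (trans_of (r i) hyz_i hzx)⟩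
  · have hxy_j : r j x y := hr hji x y hxy
    exact ⟨j, trans_of (r j) hxy_j hyz, fun hzx => hnzy (trans_of (r j) hzx hxy_j)⟩

theorem StrictUnion.isStrictOrder (hr : Antitone r) : IsStrictOrder L (StrictUnion r) where
  irrefl := StrictUnion.irrefl
  trans _ _ _ := StrictUnion.trans hr

end StrictUnion

theorem sqlt_iff {L : Type*} {sq : Ordinal → L → L → Prop} {α : Ordinal} {x y : L} :
    sqlt sq α x y ↔ sq α x y ∧ ¬ sq α y x :=
  and_congr_right fun hxy => not_congr (and_iff_right hxy)

theorem sqle_eq_reflGen_strictUnion {L : Type*} (sq : Ordinal → L → L → Prop) (κ : Ordinal) :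
    sqle sq κ = ReflGen (StrictUnion fun α : Set.Iio κ => sq α) := by
  ext x y
  simp only [sqle, sqlt_iff, StrictUnion, reflGen_iff, Subtype.exists, Set.mem_Iio, exists_prop,
    or_comm, eq_comm]

theorem stmt_4_general {L ι : Type*} [LinearOrder ι] {r : ι → L → L → Prop}
    [∀ i, IsTrans L (r i)] (hr : Antitone r) : IsPartialOrder L (ReflGen (StrictUnion r)) :=
  have := StrictUnion.isStrictOrder hr
  isPartialOrder_reflGen

theorem stmt_4
    {L : Type*} [CompleteLattice L] {κ : Ordinal} (hκ : 0 < κ)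
    (sq : Ordinal → L → L → Prop)
    (hrefl : ∀ α < κ, ∀ x : L, sq α x x)
    (htrans : ∀ α < κ, ∀ x y z : L, sq α x y → sq α y z → sq α x z)
    (ax1 : ∀ α β : Ordinal, α < β → β < κ → ∀ x y : L, sq β x y → eqa sq α x y)
    (ax2 : ∀ x y : L, (∀ α < κ, eqa sq α x y) → x = y)
    (ax3 : ∀ x : L, ∀ α < κ, ∀ X ⊆ seg sq α x, ∃ y : L, IsLubA sq α x X y)
    (ax4 : ∀ X : Set L, X.Nonempty → ∀ α < κ, ∀ y : L,
      (∀ x ∈ X, eqa sq α y x) → eqa sq α y (sSup X)) :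
    (∀ x : L, sqle sq κ x x) ∧
      (∀ x y z : L, sqle sq κ x y → sqle sq κ y z → sqle sq κ x z) ∧
      (∀ x y : L, sqle sq κ x y → sqle sq κ y x → x = y) := by
  have (α : Set.Iio κ) : IsTrans L (sq α) := ⟨htrans α α.2⟩
  have hanti : Antitone fun α : Set.Iio κ => sq α :=
    antitone_iff_forall_lt.2 fun α β hαβ x y hxy => (ax1 α β hαβ β.2 x y hxy).1
  have hpo : IsPartialOrder L (sqle sq κ) :=
    sqle_eq_reflGen_strictUnion sq κ ▸ stmt_4_general hanti
  exact ⟨hpo.refl, hpo.trans, hpo.antisymm⟩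
end

section
/- Let α < κ and suppose y = ⨆_α X, where X ⊆ (x]_α for some x ∈ L. Then y is the ≤-least element of [y]_α (i.e., y ∈ [y]_α and y ≤ z for all z ∈ [y]_α), and y is a ⊑_{α+1}-least element of [y]_α (i.e., y ⊑_{α+1} z for all z ∈ [y]_α, where this is interpreted as reading α+1 in place of α when α+1 < κ; here assume α+1 < κ). -/
/-!
The set `[y]_α` is `(y]_{α+1}`, so `⨆_{α+1} ∅` taken there is least in `[y]_α` for both `≤` and
`⊑_{α+1}`. Every `z ∈ [y]_α` lies in `(x]_α` and is a `⊑_α`-upper bound of `X`, because `y` is one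
and `y ⊑_α z`; hence `y ≤ z`. As `≤`-least elements are unique, `y = ⨆_{α+1} ∅`.
-/

section

variable {L : Type*} {sq : Ordinal → L → L → Prop} {α : Ordinal} {x y u : L} {X : Set L}

theorem eqa_refl (hrefl : ∀ x : L, sq α x x) (x : L) : eqa sq α x x :=
  ⟨hrefl x, hrefl x⟩

theorem eqa_trans {z : L} (htrans : ∀ x y z : L, sq α x y → sq α y z → sq α x z)
    (hxy : eqa sq α x y) (hyz : eqa sq α y z) : eqa sq α x z :=
  ⟨htrans _ _ _ hxy.1 hyz.1, htrans _ _ _ hyz.2 hxy.2⟩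

theorem seg_subset_seg (htrans : ∀ β < α, ∀ x y z : L, sq β x y → sq β y z → sq β x z)
    (hy : y ∈ seg sq α x) : seg sq α y ⊆ seg sq α x :=
  fun _ hz β hβ => eqa_trans (htrans β hβ) (hy β hβ) (hz β hβ)

theorem self_mem_segcl (hrefl : ∀ β ≤ α, ∀ x : L, sq β x x) (x : L) : x ∈ segcl sq α x :=
  ⟨eqa_refl (hrefl α le_rfl) x, fun β hβ => eqa_refl (hrefl β hβ.le) x⟩

theorem segcl_subset_seg : segcl sq α x ⊆ seg sq α x :=
  fun _ hz => hz.2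

theorem segcl_eq_seg_add_one : segcl sq α x = seg sq (α + 1) x := by
  ext z
  simp only [segcl, seg, Set.mem_ofPred_eq, Order.lt_add_one_iff, le_iff_eq_or_lt, forall_eq_or_imp]

namespace IsLubA

theorem sq_of_mem_seg [LE L] (hu : IsLubA sq α x ∅ u) (hy : y ∈ seg sq α x) : sq α u y :=
  (hu.2.2 y hy (by simp)).1

theorem isLeast_seg [LE L] (hu : IsLubA sq α x ∅ u) : IsLeast (seg sq α x) u :=
  ⟨hu.1, fun w hw => (hu.2.2 w hw (by simp)).2⟩

theorem isLeast_segcl [LE L] (hrefl : ∀ β ≤ α, ∀ x : L, sq β x x)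
    (htrans : ∀ β ≤ α, ∀ x y z : L, sq β x y → sq β y z → sq β x z)
    (hy : IsLubA sq α x X y) : IsLeast (segcl sq α y) y := by
  refine ⟨self_mem_segcl hrefl y, fun z hz => ?_⟩
  have hz_seg : z ∈ seg sq α x :=
    seg_subset_seg (fun β hβ => htrans β hβ.le) hy.1 (segcl_subset_seg hz)
  have hz_upper : ∀ w ∈ X, sq α w z :=
    fun w hw => htrans α le_rfl _ _ _ (hy.2.1 w hw) hz.1.1
  exact (hy.2.2 z hz_seg hz_upper).2

end IsLubA

theorem stmt_6_general [PartialOrder L]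
    (hrefl : ∀ β ≤ α, ∀ x : L, sq β x x)
    (htrans : ∀ β ≤ α, ∀ x y z : L, sq β x y → sq β y z → sq β x z)
    (hy : IsLubA sq α x X y) (hbot : ∃ u : L, IsLubA sq (α + 1) y ∅ u) :
    y ∈ segcl sq α y ∧ (∀ z ∈ segcl sq α y, y ≤ z) ∧
      (∀ z ∈ segcl sq α y, sq (α + 1) y z) := by
  have hleast : IsLeast (segcl sq α y) y := hy.isLeast_segcl hrefl htrans
  refine ⟨hleast.1, fun z hz => hleast.2 hz, ?_⟩
  obtain ⟨u, hu⟩ := hbot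
  rw [segcl_eq_seg_add_one] at hleast ⊢
  obtain rfl : u = y := hu.isLeast_seg.unique hleast
  exact fun z hz => hu.sq_of_mem_seg hz

end

theorem stmt_6
    {L : Type*} [CompleteLattice L] {κ : Ordinal} (hκ : Order.IsSuccLimit κ)
    (sq : Ordinal → L → L → Prop)
    (hrefl : ∀ α < κ, ∀ x : L, sq α x x)
    (htrans : ∀ α < κ, ∀ x y z : L, sq α x y → sq α y z → sq α x z)
    (ax1 : ∀ α β : Ordinal, α < β → β < κ → ∀ x y : L, sq β x y → eqa sq α x y)
    (ax2 : ∀ x y : L, (∀ α < κ, eqa sq α x y) → x = y)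
    (ax3 : ∀ x : L, ∀ α < κ, ∀ X ⊆ seg sq α x, ∃ y : L, IsLubA sq α x X y)
    (ax4 : ∀ X : Set L, X.Nonempty → ∀ α < κ, ∀ y : L,
      (∀ x ∈ X, eqa sq α y x) → eqa sq α y (sSup X))
    {α : Ordinal} (hα : α < κ) {x y : L} {X : Set L}
    (hX : X ⊆ seg sq α x) (hy : IsLubA sq α x X y) :
    y ∈ segcl sq α y ∧ (∀ z ∈ segcl sq α y, y ≤ z) ∧
      (∀ z ∈ segcl sq α y, sq (α + 1) y z) :=
  stmt_6_general (fun β hβ => hrefl β (hβ.trans_lt hα)) (fun β hβ => htrans β (hβ.trans_lt hα)) hy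
    (ax3 y (α + 1) (hκ.add_one_lt hα) ∅ (Set.empty_subset _))
end

section
/- For every x ∈ L, x equals the least upper bound (with respect to ≤) of the family of its slices: x = ⋁_{α < κ} x|_α. -/
/-!
The slice `x|_α` is the `≤`-least element of the class `[x]_α`. These classes shrink as `α` grows,
so the slices increase, and their supremum is already the supremum of the slices from any `α < κ`
on. All of those lie in `[x]_α`, so by Axiom 4 the supremum is `=_α x`. As this holds for every
`α < κ`, Axiom 2 makes it equal to `x`.
-/

open Set

theorem sSup_image_Ico_eq_sSup_image_Iio {ι L : Type*} [LinearOrder ι] [CompleteSemilatticeSup L]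
    {f : ι → L} {a b : ι} (hf : MonotoneOn f (Iio b)) (hab : a < b) :
    sSup (f '' Ico a b) = sSup (f '' Iio b) := by
  refine (sSup_le_sSup (image_mono Ico_subset_Iio_self)).antisymm (sSup_le ?_)
  rintro _ ⟨c, hc, rfl⟩
  have hmax : max a c < b := max_lt hab hc
  calc
    f c ≤ f (max a c) := hf hc hmax (le_max_right a c)
    _ ≤ sSup (f '' Ico a b) := le_sSup (mem_image_of_mem f ⟨le_max_left a c, hmax⟩)

section Slices

variable {L : Type*} {sq : Ordinal → L → L → Prop} {x : L}

theorem segcl_antitone : Antitone fun α => segcl sq α x := by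
  intro α β hαβ y hy
  refine ⟨?_, fun γ hγ => hy.2 γ (hγ.trans_le hαβ)⟩
  rcases hαβ.eq_or_lt with rfl | hlt
  · exact hy.1
  · exact hy.2 α hlt

theorem IsLubA.isLeast_segcl_s11 [LE L] {α : Ordinal} {y : L} (hrefl : ∀ β ≤ α, sq β x x)
    (hy : IsLubA sq α x {x} y) : IsLeast (segcl sq α x) y := by
  obtain ⟨hy_mem, hy_upper, hy_least⟩ := hy
  have hx_mem : x ∈ seg sq α x := fun β hβ => ⟨hrefl β hβ.le, hrefl β hβ.le⟩
  have hyx : sq α y x := (hy_least x hx_mem (forall_eq.2 (hrefl α le_rfl))).1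
  exact ⟨⟨⟨hy_upper x rfl, hyx⟩, hy_mem⟩,
    fun w hw => (hy_least w hw.2 (forall_eq.2 hw.1.1)).2⟩

theorem monotoneOn_of_isLeast_segcl [Preorder L] {s : Ordinal → L} {I : Set Ordinal}
    (hs : ∀ α ∈ I, IsLeast (segcl sq α x) (s α)) : MonotoneOn s I :=
  fun α hα β hβ hαβ => (hs β hβ).mono (hs α hα) (segcl_antitone hαβ)

end Slices

theorem stmt_11_general {L : Type*} [CompleteSemilatticeSup L] {κ : Ordinal}
    (sq : Ordinal → L → L → Prop)
    (hrefl : ∀ α < κ, ∀ x : L, sq α x x)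
    (ax2 : ∀ x y : L, (∀ α < κ, eqa sq α x y) → x = y)
    (ax4 : ∀ X : Set L, X.Nonempty → ∀ α < κ, ∀ y : L,
      (∀ x ∈ X, eqa sq α y x) → eqa sq α y (sSup X))
    (sl : Ordinal → L → L)
    (hsl : ∀ α < κ, ∀ x : L, IsLubA sq α x {x} (sl α x)) (x : L) :
    x = sSup ((fun α => sl α x) '' Iio κ) := by
  have hleast : ∀ α < κ, IsLeast (segcl sq α x) (sl α x) := fun α hα =>
    (hsl α hα x).isLeast_segcl_s11 fun β hβ => hrefl β (hβ.trans_lt hα) x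
  have hmono : MonotoneOn (fun α => sl α x) (Iio κ) := monotoneOn_of_isLeast_segcl hleast
  refine ax2 x _ fun α hα => ?_
  rw [← sSup_image_Ico_eq_sSup_image_Iio hmono hα]
  refine ax4 _ ((nonempty_Ico.2 hα).image _) α hα x ?_
  rintro _ ⟨β, ⟨hαβ, hβ⟩, rfl⟩
  exact (segcl_antitone hαβ (hleast β hβ).1).1

theorem stmt_11
    {L : Type*} [CompleteLattice L] {κ : Ordinal} (hκ : Order.IsSuccLimit κ)
    (sq : Ordinal → L → L → Prop)
    (hrefl : ∀ α < κ, ∀ x : L, sq α x x)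
    (htrans : ∀ α < κ, ∀ x y z : L, sq α x y → sq α y z → sq α x z)
    (ax1 : ∀ α β : Ordinal, α < β → β < κ → ∀ x y : L, sq β x y → eqa sq α x y)
    (ax2 : ∀ x y : L, (∀ α < κ, eqa sq α x y) → x = y)
    (ax3 : ∀ x : L, ∀ α < κ, ∀ X ⊆ seg sq α x, ∃ y : L, IsLubA sq α x X y)
    (ax4 : ∀ X : Set L, X.Nonempty → ∀ α < κ, ∀ y : L,
      (∀ x ∈ X, eqa sq α y x) → eqa sq α y (sSup X))
    (sl : Ordinal → L → L)
    (hsl : ∀ α < κ, ∀ x : L, IsLubA sq α x {x} (sl α x)) :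
    ∀ x : L, x = sSup ((fun α => sl α x) '' Set.Iio κ) :=
  stmt_11_general sq hrefl ax2 ax4 sl hsl
end

section
/- Let α ≤ κ be an ordinal and let (x_β)_{β < α} be a sequence of elements of L such that x_β =_β x_γ and x_β ≤ x_γ whenever β < γ < α. If x = ⋁_{β < α} x_β, then x_β =_β x holds for all β < α. -/
open Set

/-! The terms from the index `β` on are cofinal in the whole sequence, so they have the same
supremum. They all lie in `{z | x_β =_β z}`, which `ax4` makes closed under suprema of nonempty
sets; hence the supremum lies there as well. Only directed suprema occur in this argument. -/

section Directed

variable {ι L : Type*} [Preorder ι] [Preorder L] {s : Set ι} {f : ι → L} {i : ι} {x : L}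

theorem isCofinalFor_image_inter_Ici (hs : DirectedOn (· ≤ ·) s) (hf : MonotoneOn f s)
    (hi : i ∈ s) : IsCofinalFor (f '' s) (f '' (s ∩ Ici i)) := by
  rintro _ ⟨j, hj, rfl⟩
  obtain ⟨k, hk, hik, hjk⟩ := hs i hi j hj
  exact ⟨f k, mem_image_of_mem f ⟨hk, hik⟩, hf hj hk hjk⟩

theorem directedOn_image_of_monotoneOn (hs : DirectedOn (· ≤ ·) s) (hf : MonotoneOn f s) :
    DirectedOn (· ≤ ·) (f '' s) :=
  directedOn_image.2 <| hs.mono' fun _ ha _ hb hab ↦ hf ha hb hab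

theorem mem_of_isLUB_image_of_forall_ge_mem {C : Set L} (hC : DirSupClosed C)
    (hs : DirectedOn (· ≤ ·) s) (hf : MonotoneOn f s) (hi : i ∈ s)
    (hfC : ∀ j ∈ s, i ≤ j → f j ∈ C) (hx : IsLUB (f '' s) x) : x ∈ C := by
  have htail : f '' (s ∩ Ici i) ⊆ f '' s := image_mono inter_subset_left
  have hcofinal := isCofinalFor_image_inter_Ici hs hf hi
  have hdir := (directedOn_image_of_monotoneOn hs hf).of_isCofinalFor htail hcofinal
  have hmem : f '' (s ∩ Ici i) ⊆ C := image_subset_iff.2 fun j hj ↦ hfC j hj.1 hj.2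
  have hne : (f '' (s ∩ Ici i)).Nonempty := ⟨f i, mem_image_of_mem f ⟨hi, self_mem_Ici⟩⟩
  exact hC hmem hne hdir (hx.of_isCofinalFor htail hcofinal)

theorem stmt_13_general {r : ι → L → L → Prop}
    (hclosed : ∀ i ∈ s, ∀ y, DirSupClosed {z | r i y z})
    (hs : DirectedOn (· ≤ ·) s) (hf : MonotoneOn f s)
    (hr : ∀ i ∈ s, ∀ j ∈ s, i ≤ j → r i (f i) (f j)) (hx : IsLUB (f '' s) x) :
    ∀ i ∈ s, r i (f i) x :=
  fun i hi ↦ mem_of_isLUB_image_of_forall_ge_mem (hclosed i hi (f i)) hs hf hi (hr i hi) hx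

end Directed

theorem stmt_13
    {L : Type*} [CompleteLattice L] {κ : Ordinal} (hκ : 0 < κ)
    (sq : Ordinal → L → L → Prop)
    (hrefl : ∀ α < κ, ∀ x : L, sq α x x)
    (htrans : ∀ α < κ, ∀ x y z : L, sq α x y → sq α y z → sq α x z)
    (ax1 : ∀ α β : Ordinal, α < β → β < κ → ∀ x y : L, sq β x y → eqa sq α x y)
    (ax2 : ∀ x y : L, (∀ α < κ, eqa sq α x y) → x = y)
    (ax3 : ∀ x : L, ∀ α < κ, ∀ X ⊆ seg sq α x, ∃ y : L, IsLubA sq α x X y)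
    (ax4 : ∀ X : Set L, X.Nonempty → ∀ α < κ, ∀ y : L,
      (∀ x ∈ X, eqa sq α y x) → eqa sq α y (sSup X))
    {α : Ordinal} (hα : α ≤ κ) (xs : Ordinal → L)
    (hmono : ∀ β γ : Ordinal, β < γ → γ < α → eqa sq β (xs β) (xs γ) ∧ xs β ≤ xs γ) :
    ∀ β < α, eqa sq β (xs β) (sSup (xs '' Set.Iio α)) := by
  have hclosed : ∀ β ∈ Iio α, ∀ y, DirSupClosed {z | eqa sq β y z} :=
    fun β hβ y X hX hne _ a ha ↦ ha.sSup_eq ▸ ax4 X hne β (hβ.trans_le hα) y hX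
  have hxs : MonotoneOn xs (Iio α) :=
    monotoneOn_iff_forall_lt.2 fun β _ γ hγ hβγ ↦ (hmono β γ hβγ hγ).2
  have heqa : ∀ β ∈ Iio α, ∀ γ ∈ Iio α, β ≤ γ → eqa sq β (xs β) (xs γ) := by
    intro β hβ γ hγ hβγ
    obtain rfl | hβγ := hβγ.eq_or_lt
    · exact ⟨hrefl β (hβ.trans_le hα) _, hrefl β (hβ.trans_le hα) _⟩
    · exact (hmono β γ hβγ hγ).1
  exact stmt_13_general hclosed (.of_linearOrder _) hxs heqa (isLUB_sSup _)
end

section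
/- Suppose (x_α)_{α<κ} is a compatible sequence and let x = ⋁_{α<κ} x_α. Then x|_α = x_α for all α < κ. -/
/-!
A compatible sequence is increasing, so its supremum `x` is also the supremum of the tail
`(x_β)_{β ≥ α}`, whose members are all `=_α`-equivalent to `x_α`. Hence `x =_α x_α` by Axiom 4. The
slice of `x` at `α` therefore lies in `[x_α]_α` and, by its minimality, below `x_α`, which is the
least element of that class; so the two coincide.
-/

/-- `(x_α)_{α<κ}` is a compatible sequence, encoded as a function on all ordinals of which only the
values below `κ` matter. -/
structure IsCompatible {L : Type*} [LE L] (sq : Ordinal → L → L → Prop) (κ : Ordinal)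
    (xs : Ordinal → L) : Prop where
  isLeast : ∀ α < κ, IsLeast (segcl sq α (xs α)) (xs α)
  eqa_of_lt : ∀ α β : Ordinal, α < β → β < κ → eqa sq α (xs α) (xs β)

theorem isCofinalFor_image_inter_Ici_s14 {ι L : Type*} [LinearOrder ι] [Preorder L] {f : ι → L}
    {s : Set ι} {a : ι} (hf : MonotoneOn f s) (ha : a ∈ s) :
    IsCofinalFor (f '' s) (f '' (s ∩ Set.Ici a)) := by
  rintro _ ⟨i, hi, rfl⟩
  rcases le_total a i with hai | hia
  · exact ⟨f i, Set.mem_image_of_mem f ⟨hi, hai⟩, le_rfl⟩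
  · exact ⟨f a, Set.mem_image_of_mem f ⟨ha, le_rfl⟩, hf hi ha hia⟩

section

variable {L : Type*} {sq : Ordinal → L → L → Prop} {α κ : Ordinal}

theorem eqa.symm {x y : L} (h : eqa sq α x y) : eqa sq α y x :=
  And.symm h

theorem eqa.mem_seg {x y : L} (ax1 : ∀ β < α, ∀ x y : L, sq α x y → eqa sq β x y)
    (h : eqa sq α x y) : y ∈ seg sq α x :=
  fun β hβ => ax1 β hβ x y h.1

theorem eqa.mem_segcl {x y : L} (ax1 : ∀ β < α, ∀ x y : L, sq α x y → eqa sq β x y)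
    (h : eqa sq α x y) : y ∈ segcl sq α x :=
  ⟨h, h.mem_seg ax1⟩

theorem IsLubA.eq_of_eqa [PartialOrder L] {x y s : L}
    (htrans : ∀ x y z : L, sq α x y → sq α y z → sq α x z)
    (ax1 : ∀ β < α, ∀ x y : L, sq α x y → eqa sq β x y)
    (hs : IsLubA sq α x {x} s) (hy : y ∈ lowerBounds (segcl sq α y))
    (hyx : eqa sq α y x) : s = y := by
  obtain ⟨-, hxs, hmin⟩ := hs
  obtain ⟨hsy, hsy_le⟩ : sq α s y ∧ s ≤ y :=
    hmin y (hyx.symm.mem_seg ax1) (by rintro _ rfl; exact hyx.2)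
  have hys : eqa sq α y s := ⟨htrans y x s hyx.1 (hxs x rfl), hsy⟩
  exact le_antisymm hsy_le (hy (hys.mem_segcl ax1))

namespace IsCompatible

variable {xs : Ordinal → L}

theorem of_forall_le [LE L] (hrefl : ∀ α < κ, ∀ x : L, sq α x x)
    (hleast : ∀ α < κ, ∀ z ∈ segcl sq α (xs α), xs α ≤ z)
    (hcompat : ∀ α β : Ordinal, α < β → β < κ → eqa sq α (xs α) (xs β)) :
    IsCompatible sq κ xs where
  isLeast α hα :=
    have heqa : ∀ β < κ, eqa sq β (xs α) (xs α) := fun β hβ =>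
      ⟨hrefl β hβ (xs α), hrefl β hβ (xs α)⟩
    ⟨⟨heqa α hα, fun β hβ => heqa β (hβ.trans hα)⟩, hleast α hα⟩
  eqa_of_lt := hcompat

theorem eqa_of_le [LE L] (hxs : IsCompatible sq κ xs) {β : Ordinal} (hαβ : α ≤ β) (hβ : β < κ) :
    eqa sq α (xs α) (xs β) := by
  rcases hαβ.eq_or_lt with rfl | hlt
  · exact (hxs.isLeast α hβ).1.1
  · exact hxs.eqa_of_lt α β hlt hβ

theorem monotoneOn [Preorder L] (hxs : IsCompatible sq κ xs)
    (ax1 : ∀ α β : Ordinal, α < β → β < κ → ∀ x y : L, sq β x y → eqa sq α x y) :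
    MonotoneOn xs (Set.Iio κ) := fun α hα _ hβ hαβ =>
  (hxs.isLeast α hα).2 <|
    (hxs.eqa_of_le hαβ hβ).mem_segcl fun γ hγ => ax1 γ α hγ hα

theorem eqa_of_isLUB [Preorder L] (hxs : IsCompatible sq κ xs)
    (ax1 : ∀ α β : Ordinal, α < β → β < κ → ∀ x y : L, sq β x y → eqa sq α x y)
    (ax4 : ∀ X : Set L, X.Nonempty → ∀ y z : L, IsLUB X z →
      (∀ x ∈ X, eqa sq α y x) → eqa sq α y z)
    (hα : α < κ) {x : L} (hx : IsLUB (xs '' Set.Iio κ) x) : eqa sq α (xs α) x := by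
  have htail : IsLUB (xs '' (Set.Iio κ ∩ Set.Ici α)) x :=
    hx.of_isCofinalFor (Set.image_mono Set.inter_subset_left)
      (isCofinalFor_image_inter_Ici_s14 (hxs.monotoneOn ax1) hα)
  have htail_nonempty : (Set.Iio κ ∩ Set.Ici α).Nonempty := ⟨α, hα, Set.self_mem_Ici⟩
  refine ax4 _ (htail_nonempty.image xs) (xs α) x htail ?_
  rintro _ ⟨β, ⟨hβ, hαβ⟩, rfl⟩
  exact hxs.eqa_of_le hαβ hβ

end IsCompatible

end

theorem stmt_14_general
    {L : Type*} [PartialOrder L] {κ : Ordinal} (sq : Ordinal → L → L → Prop)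
    (htrans : ∀ α < κ, ∀ x y z : L, sq α x y → sq α y z → sq α x z)
    (ax1 : ∀ α β : Ordinal, α < β → β < κ → ∀ x y : L, sq β x y → eqa sq α x y)
    (ax4 : ∀ X : Set L, X.Nonempty → ∀ α < κ, ∀ y z : L, IsLUB X z →
      (∀ x ∈ X, eqa sq α y x) → eqa sq α y z)
    {xs : Ordinal → L} (hxs : IsCompatible sq κ xs) {x : L} (hx : IsLUB (xs '' Set.Iio κ) x) :
    ∀ α < κ, ∀ s : L, IsLubA sq α x {x} s → s = xs α := by
  intro α hα s hs
  have hxα : eqa sq α (xs α) x := hxs.eqa_of_isLUB ax1 (fun X hX => ax4 X hX α hα) hα hx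
  exact hs.eq_of_eqa (htrans α hα) (fun β hβ => ax1 β α hβ hα) (hxs.isLeast α hα).2 hxα

theorem stmt_14
    {L : Type*} [CompleteLattice L] {κ : Ordinal} (hκ : Order.IsSuccLimit κ)
    (sq : Ordinal → L → L → Prop)
    (hrefl : ∀ α < κ, ∀ x : L, sq α x x)
    (htrans : ∀ α < κ, ∀ x y z : L, sq α x y → sq α y z → sq α x z)
    (ax1 : ∀ α β : Ordinal, α < β → β < κ → ∀ x y : L, sq β x y → eqa sq α x y)
    (ax2 : ∀ x y : L, (∀ α < κ, eqa sq α x y) → x = y)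
    (ax3 : ∀ x : L, ∀ α < κ, ∀ X ⊆ seg sq α x, ∃ y : L, IsLubA sq α x X y)
    (ax4 : ∀ X : Set L, X.Nonempty → ∀ α < κ, ∀ y : L,
      (∀ x ∈ X, eqa sq α y x) → eqa sq α y (sSup X))
    (xs : Ordinal → L)
    (hleast : ∀ α < κ, ∀ z ∈ segcl sq α (xs α), xs α ≤ z)
    (hcompat : ∀ α β : Ordinal, α < β → β < κ → eqa sq α (xs α) (xs β)) :
    ∀ α < κ, ∀ s : L,
      IsLubA sq α (sSup (xs '' Set.Iio κ)) {sSup (xs '' Set.Iio κ)} s → s = xs α :=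
  stmt_14_general sq htrans ax1 (fun X hX α hα y _ hz h => hz.sSup_eq ▸ ax4 X hX α hα y h)
    (.of_forall_le hrefl hleast hcompat) (isLUB_sSup _)
end

section
/- Suppose (x_β)_{β<α}, with α ≤ κ, is a partial compatible sequence and x = ⋁_{β<α} x_β. If z ∈ L satisfies x_β ⊑_β z for all β < α, then x ⊑ z. -/
/-!
Let `γ` be the first level at which `x = ⋁ x_β` and `z` differ; it remains to see that `x ⊑_γ z`.
If `γ < α`, this follows from `x =_γ x_γ ⊑_γ z`. If `α ≤ γ`, then `x` is the `≤`-least element of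
`(x]_α`, hence also of the smaller set `(x]_γ`. So `x = ⨆_γ ∅`, which is `⊑_γ` every element of
`(x]_γ`, in particular `z`.
-/

section

variable {L : Type*} {sq : Ordinal → L → L → Prop} {α β γ κ : Ordinal}

theorem eqa.trans (htrans : ∀ x y z : L, sq α x y → sq α y z → sq α x z) {x y z : L}
    (hxy : eqa sq α x y) (hyz : eqa sq α y z) : eqa sq α x z :=
  ⟨htrans x y z hxy.1 hyz.1, htrans z y x hyz.2 hxy.2⟩

theorem seg_anti (x : L) : Antitone fun α => seg sq α x :=
  fun _ _ hαγ _ hy β hβ => hy β (hβ.trans_le hαγ)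

theorem self_mem_seg {x : L} (hrefl : ∀ β < α, sq β x x) : x ∈ seg sq α x :=
  fun β hβ => ⟨hrefl β hβ, hrefl β hβ⟩

theorem sqle_of_forall_mem_seg {x z : L} (hext : (∀ γ < κ, eqa sq γ x z) → x = z)
    (h : ∀ γ < κ, z ∈ seg sq γ x → sq γ x z) : sqle sq κ x z := by
  by_cases hall : ∀ γ < κ, eqa sq γ x z
  · exact Or.inr (hext hall)
  · push Not at hall
    obtain ⟨γ, ⟨hγ, hne⟩, hmin⟩ := exists_minimal_of_wellFoundedLT _ hall
    have hz : z ∈ seg sq γ x := fun δ hδ => by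
      by_contra hδne
      exact (hmin ⟨hδ.trans hγ, hδne⟩ hδ.le).not_gt hδ
    exact Or.inl ⟨γ, hγ, h γ hγ hz, hne⟩

theorem sq_of_mem_lowerBounds_seg [PartialOrder L] {x y z : L} (hrefl : ∀ β < γ, sq β x x)
    (hx : x ∈ lowerBounds (seg sq α x)) (hαγ : α ≤ γ) (hy : IsLubA sq γ x ∅ y)
    (hz : z ∈ seg sq γ x) : sq γ x z := by
  obtain ⟨hymem, -, hymin⟩ := hy
  have hyx : y ≤ x := (hymin x (self_mem_seg hrefl) (by simp)).2
  have hxy : x ≤ y := hx (seg_anti x hαγ hymem)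
  obtain rfl := hxy.antisymm hyx
  exact (hymin z hz (by simp)).1

end

theorem sSup_image_Ico_of_monotoneOn {ι L : Type*} [LinearOrder ι] [CompleteSemilatticeSup L]
    {f : ι → L} {a b : ι} (hf : MonotoneOn f (Set.Iio b)) (hab : a < b) :
    sSup (f '' Set.Ico a b) = sSup (f '' Set.Iio b) := by
  refine (sSup_le_sSup (Set.image_mono Set.Ico_subset_Iio_self)).antisymm (sSup_le ?_)
  rintro _ ⟨i, hi, rfl⟩
  calc f i ≤ f (max i a) := hf hi (max_lt hi hab) (le_max_left i a)
    _ ≤ sSup (f '' Set.Ico a b) :=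
      le_sSup (Set.mem_image_of_mem f ⟨le_max_right i a, max_lt hi hab⟩)

/-- A partial compatible sequence of length `α`. Only the values of `xs` below `α` matter. That
`xs β` itself lies in `[xs β]_β` is automatic for reflexive `sq`, so leastness is recorded as a
lower bound. -/
structure IsCompatibleSeq {L : Type*} [LE L] (sq : Ordinal → L → L → Prop) (α : Ordinal)
    (xs : Ordinal → L) : Prop where
  le_of_mem_segcl : ∀ β < α, ∀ z ∈ segcl sq β (xs β), xs β ≤ z
  eqa_of_lt : ∀ β γ : Ordinal, β < γ → γ < α → eqa sq β (xs β) (xs γ)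

namespace IsCompatibleSeq

variable {L : Type*} {sq : Ordinal → L → L → Prop} {α β γ : Ordinal} {xs : Ordinal → L}

theorem le_of_eqa [LE L] (hxs : IsCompatibleSeq sq α xs)
    (ax1 : ∀ β γ : Ordinal, β < γ → γ < α → ∀ x y : L, sq γ x y → eqa sq β x y)
    (hβ : β < α) {y : L} (hy : eqa sq β (xs β) y) : xs β ≤ y :=
  hxs.le_of_mem_segcl β hβ y ⟨hy, fun δ hδ => ax1 δ β hδ hβ _ _ hy.1⟩

theorem eqa_of_le [LE L] (hxs : IsCompatibleSeq sq α xs)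
    (hrefl : ∀ β < α, ∀ x : L, sq β x x) (hβγ : β ≤ γ) (hγ : γ < α) :
    eqa sq β (xs β) (xs γ) := by
  rcases hβγ.eq_or_lt with rfl | hlt
  · exact ⟨hrefl β hγ _, hrefl β hγ _⟩
  · exact hxs.eqa_of_lt β γ hlt hγ

theorem monotoneOn [Preorder L] (hxs : IsCompatibleSeq sq α xs)
    (ax1 : ∀ β γ : Ordinal, β < γ → γ < α → ∀ x y : L, sq γ x y → eqa sq β x y) :
    MonotoneOn xs (Set.Iio α) :=
  monotoneOn_iff_forall_lt.2 fun β hβ γ hγ hβγ => hxs.le_of_eqa ax1 hβ (hxs.eqa_of_lt β γ hβγ hγ)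

variable [CompleteSemilatticeSup L]

theorem eqa_sSup (hxs : IsCompatibleSeq sq α xs) (hrefl : ∀ β < α, ∀ x : L, sq β x x)
    (ax1 : ∀ β γ : Ordinal, β < γ → γ < α → ∀ x y : L, sq γ x y → eqa sq β x y)
    (ax4 : ∀ X : Set L, X.Nonempty → ∀ β < α, ∀ y : L,
      (∀ x ∈ X, eqa sq β y x) → eqa sq β y (sSup X))
    (hβ : β < α) : eqa sq β (xs β) (sSup (xs '' Set.Iio α)) := by
  -- By monotonicity the supremum may be taken over `[β, α)`, where every term is `=_β` to `xs β`.
  rw [← sSup_image_Ico_of_monotoneOn (hxs.monotoneOn ax1) hβ]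
  refine ax4 _ ((Set.nonempty_Ico.2 hβ).image xs) β hβ _ ?_
  rintro _ ⟨γ, ⟨hβγ, hγ⟩, rfl⟩
  exact hxs.eqa_of_le hrefl hβγ hγ

theorem isLeast_seg_sSup (hxs : IsCompatibleSeq sq α xs)
    (hrefl : ∀ β < α, ∀ x : L, sq β x x)
    (htrans : ∀ β < α, ∀ x y z : L, sq β x y → sq β y z → sq β x z)
    (ax1 : ∀ β γ : Ordinal, β < γ → γ < α → ∀ x y : L, sq γ x y → eqa sq β x y)
    (ax4 : ∀ X : Set L, X.Nonempty → ∀ β < α, ∀ y : L,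
      (∀ x ∈ X, eqa sq β y x) → eqa sq β y (sSup X)) :
    IsLeast (seg sq α (sSup (xs '' Set.Iio α))) (sSup (xs '' Set.Iio α)) := by
  refine ⟨self_mem_seg fun β hβ => hrefl β hβ _, fun y hy => sSup_le ?_⟩
  rintro _ ⟨β, hβ, rfl⟩
  exact hxs.le_of_eqa ax1 hβ ((hxs.eqa_sSup hrefl ax1 ax4 hβ).trans (htrans β hβ) (hy β hβ))

end IsCompatibleSeq

theorem stmt_15_general
    {L : Type*} [CompleteSemilatticeSup L] {κ : Ordinal} (sq : Ordinal → L → L → Prop)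
    (hrefl : ∀ α < κ, ∀ x : L, sq α x x)
    (htrans : ∀ α < κ, ∀ x y z : L, sq α x y → sq α y z → sq α x z)
    (ax1 : ∀ α β : Ordinal, α < β → β < κ → ∀ x y : L, sq β x y → eqa sq α x y)
    (ax2 : ∀ x y : L, (∀ α < κ, eqa sq α x y) → x = y)
    (ax3 : ∀ x : L, ∀ α < κ, ∃ y : L, IsLubA sq α x ∅ y)
    (ax4 : ∀ X : Set L, X.Nonempty → ∀ α < κ, ∀ y : L,
      (∀ x ∈ X, eqa sq α y x) → eqa sq α y (sSup X))
    {α : Ordinal} (hα : α ≤ κ) {xs : Ordinal → L} (hxs : IsCompatibleSeq sq α xs)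
    {z : L} (hz : ∀ β < α, sq β (xs β) z) :
    sqle sq κ (sSup (xs '' Set.Iio α)) z := by
  have hreflα : ∀ β < α, ∀ x : L, sq β x x := fun β hβ => hrefl β (hβ.trans_le hα)
  have ax1α : ∀ β γ : Ordinal, β < γ → γ < α → ∀ x y : L, sq γ x y → eqa sq β x y :=
    fun β γ hβγ hγ => ax1 β γ hβγ (hγ.trans_le hα)
  have ax4α : ∀ X : Set L, X.Nonempty → ∀ β < α, ∀ y : L,
      (∀ x ∈ X, eqa sq β y x) → eqa sq β y (sSup X) :=
    fun X hX β hβ => ax4 X hX β (hβ.trans_le hα)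
  refine sqle_of_forall_mem_seg (ax2 _ z) fun γ hγ hzγ => ?_
  rcases lt_or_ge γ α with hγα | hαγ
  · exact htrans γ hγ _ _ _ (hxs.eqa_sSup hreflα ax1α ax4α hγα).2 (hz γ hγα)
  · obtain ⟨y, hy⟩ := ax3 (sSup (xs '' Set.Iio α)) γ hγ
    have hleast := hxs.isLeast_seg_sSup hreflα (fun β hβ => htrans β (hβ.trans_le hα)) ax1α ax4α
    exact sq_of_mem_lowerBounds_seg (fun β hβ => hrefl β (hβ.trans hγ) _) hleast.2 hαγ hy hzγ

theorem stmt_15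
    {L : Type*} [CompleteLattice L] {κ : Ordinal} (hκ : Order.IsSuccLimit κ)
    (sq : Ordinal → L → L → Prop)
    (hrefl : ∀ α < κ, ∀ x : L, sq α x x)
    (htrans : ∀ α < κ, ∀ x y z : L, sq α x y → sq α y z → sq α x z)
    (ax1 : ∀ α β : Ordinal, α < β → β < κ → ∀ x y : L, sq β x y → eqa sq α x y)
    (ax2 : ∀ x y : L, (∀ α < κ, eqa sq α x y) → x = y)
    (ax3 : ∀ x : L, ∀ α < κ, ∀ X ⊆ seg sq α x, ∃ y : L, IsLubA sq α x X y)
    (ax4 : ∀ X : Set L, X.Nonempty → ∀ α < κ, ∀ y : L,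
      (∀ x ∈ X, eqa sq α y x) → eqa sq α y (sSup X))
    {α : Ordinal} (hα : α ≤ κ) (xs : Ordinal → L)
    (hleast : ∀ β < α, ∀ z ∈ segcl sq β (xs β), xs β ≤ z)
    (hcompat : ∀ β γ : Ordinal, β < γ → γ < α → eqa sq β (xs β) (xs γ))
    {z : L} (hz : ∀ β < α, sq β (xs β) z) :
    sqle sq κ (sSup (xs '' Set.Iio α)) z :=
  stmt_15_general sq hrefl htrans ax1 ax2 (fun x β hβ => ax3 x β hβ ∅ (Set.empty_subset _)) ax4 hα
    ⟨hleast, hcompat⟩ hz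
end

section
/- Assume additionally Axiom 5: for all x, y ∈ L and α < κ, if x ≤ y and x =_β y for all β < α, then x ⊑_α y. Then for all x, y ∈ L, x ≤ y implies x ⊑ y. -/
theorem exists_mem_seg_not_eqa {L : Type*} {κ : Ordinal} {sq : Ordinal → L → L → Prop} {x y : L}
    (h : ∃ α < κ, ¬ eqa sq α x y) : ∃ α < κ, y ∈ seg sq α x ∧ ¬ eqa sq α x y := by
  obtain ⟨α, hmin⟩ := exists_minimal_of_wellFoundedLT (fun α => α < κ ∧ ¬ eqa sq α x y) h
  obtain ⟨hα, hne⟩ := hmin.prop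
  refine ⟨α, hα, fun β hβ => ?_, hne⟩
  by_contra hβne
  exact hmin.not_prop_of_lt hβ ⟨hβ.trans hα, hβne⟩

theorem stmt_19_general {L : Type*} [LE L] {κ : Ordinal} {sq : Ordinal → L → L → Prop}
    (ax2 : ∀ x y : L, (∀ α < κ, eqa sq α x y) → x = y)
    (ax5 : ∀ α < κ, ∀ x y : L, x ≤ y → (∀ β < α, eqa sq β x y) → sq α x y)
    {x y : L} (hxy : x ≤ y) : sqle sq κ x y := by
  by_cases heq : ∀ α < κ, eqa sq α x y
  · exact Or.inr (ax2 x y heq)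
  · push Not at heq
    obtain ⟨α, hα, hseg, hne⟩ := exists_mem_seg_not_eqa heq
    exact Or.inl ⟨α, hα, ax5 α hα x y hxy hseg, hne⟩

theorem stmt_19
    {L : Type*} [CompleteLattice L] {κ : Ordinal} (hκ : 0 < κ)
    (sq : Ordinal → L → L → Prop)
    (hrefl : ∀ α < κ, ∀ x : L, sq α x x)
    (htrans : ∀ α < κ, ∀ x y z : L, sq α x y → sq α y z → sq α x z)
    (ax1 : ∀ α β : Ordinal, α < β → β < κ → ∀ x y : L, sq β x y → eqa sq α x y)
    (ax2 : ∀ x y : L, (∀ α < κ, eqa sq α x y) → x = y)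
    (ax3 : ∀ x : L, ∀ α < κ, ∀ X ⊆ seg sq α x, ∃ y : L, IsLubA sq α x X y)
    (ax4 : ∀ X : Set L, X.Nonempty → ∀ α < κ, ∀ y : L,
      (∀ x ∈ X, eqa sq α y x) → eqa sq α y (sSup X))
    (ax5 : ∀ α < κ, ∀ x y : L, x ≤ y → (∀ β < α, eqa sq β x y) → sq α x y) :
    ∀ x y : L, x ≤ y → sqle sq κ x y :=
  fun _ _ hxy => stmt_19_general ax2 ax5 hxy
end
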